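/- Let E be a Banach space, T > 0, and let K be a Volterra kernel on [0,T] satisfying Condition (A) with exponent α ∈ [0, 1/4). Let ψ: [0,T]² → E be strongly λ-Hölder bi-continuous with λ > α. Then for every ε > 0 there exists δ > 0 such that for every grid partition π of [0,T]² with mesh ‖π‖ < δ, the step approximation ψ^π satisfies ∫_{[0,T]²} ‖(K*⊗K*)(ψ^π − ψ)(u,v)‖_E² du dv < ε; i.e., (K*⊗K*)(ψ^π − ψ) converges to 0 in L²([0,T]²; E) as the mesh of the partition tends to 0. -/

import Mathlib

open MeasureTheory Set

noncomputable section

namespace YS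

variable {E : Type*} [NormedAddCommGroup E] [NormedSpace ℝ E]

/-- A Volterra kernel: a measurable `K : ℝ² → ℝ` with `K t s = 0` whenever `s ≥ t`. -/
def IsVolterraKernel (K : ℝ → ℝ → ℝ) : Prop :=
  Measurable (Function.uncurry K) ∧ ∀ t s : ℝ, t ≤ s → K t s = 0

/-- Condition (A) with exponent `α` and constant `C`; here `K' t s` denotes the partial
derivative `∂K(t,s)/∂t`, whose existence is part of the condition. -/
def CondA (T α C : ℝ) (K K' : ℝ → ℝ → ℝ) : Prop :=
  (∀ s t : ℝ, 0 < s → s < t → t ≤ T → |K t s| ≤ C * s ^ (-α) * (t - s) ^ (-α)) ∧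
  ∀ s t : ℝ, 0 < s → s < t → t ≤ T →
    HasDerivAt (fun r => K r s) (K' t s) t ∧ |K' t s| ≤ C * (t - s) ^ (-(α + 1))

/-- The operator `𝒦*`:  `(𝒦*φ)(s) = φ(s)K(T,s) + ∫_s^T [φ(r) − φ(s)] ∂K(r,s)/∂r dr`. -/
def Kstar (T : ℝ) (K K' : ℝ → ℝ → ℝ) (φ : ℝ → E) (s : ℝ) : E :=
  K T s • φ s + ∫ r in s..T, K' r s • (φ r - φ s)

/-- The operator `A^K`. -/
def AK (T : ℝ) (K' : ℝ → ℝ → ℝ) (φ : ℝ → E) (s : ℝ) : E :=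
  ∫ r in s..T, K' r s • (φ r - φ s)

/-- Rectangular increment `f(u₁,u₂;v₁,v₂)`. -/
def rectInc (ψ : ℝ → ℝ → E) (u₁ u₂ v₁ v₂ : ℝ) : E :=
  ψ u₁ v₁ + ψ u₂ v₂ - ψ u₁ v₂ - ψ u₂ v₁

/-- The operator `B^K`. -/
def BK (T : ℝ) (K' : ℝ → ℝ → ℝ) (ψ : ℝ → ℝ → E) (u v : ℝ) : E :=
  ∫ r₂ in v..T, ∫ r₁ in u..T, (K' r₁ u * K' r₂ v) • rectInc ψ u r₁ v r₂

/-- The operator `𝒦* ⊗ 𝒦*`. -/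
def KstarT (T : ℝ) (K K' : ℝ → ℝ → ℝ) (ψ : ℝ → ℝ → E) (u v : ℝ) : E :=
  (K T u * K T v) • ψ u v + K T v • AK T K' (fun x => ψ x v) u +
    K T u • AK T K' (fun y => ψ u y) v + BK T K' ψ u v

/-- A partition `0 = s₀ < s₁ < ⋯ < s_n = T` of `[0,T]`. -/
structure Partition (T : ℝ) where
  n : ℕ
  pts : ℕ → ℝ
  n_pos : 0 < n
  first : pts 0 = 0
  last : pts n = T
  lt : ∀ i < n, pts i < pts (i + 1)

/-- Mesh of a partition: the largest increment. -/
def Partition.mesh {T : ℝ} (P : Partition T) : ℝ :=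
  (Finset.range P.n).sup' (Finset.nonempty_range_iff.mpr P.n_pos.ne')
    fun i => P.pts (i + 1) - P.pts i

/-- One-dimensional step approximation `φ^π`. -/
def step1 {T : ℝ} (P : Partition T) (φ : ℝ → E) (s : ℝ) : E :=
  ∑ i ∈ Finset.range P.n,
    (Set.Ico (P.pts i) (P.pts (i + 1))).indicator (fun _ => φ (P.pts i)) s

/-- Two-dimensional step approximation `ψ^π` for the grid partition `P × Q`. -/
def step2 {T : ℝ} (P Q : Partition T) (ψ : ℝ → ℝ → E) (u v : ℝ) : E :=
  ∑ i ∈ Finset.range P.n, ∑ j ∈ Finset.range Q.n,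
    ((Set.Ico (P.pts i) (P.pts (i + 1))) ×ˢ (Set.Ico (Q.pts j) (Q.pts (j + 1)))).indicator
      (fun _ => ψ (P.pts i) (Q.pts j)) (u, v)

/-- `λ`-Hölder continuity on `[0,T]` with constant `C`. -/
def IsHolderWith (T lam C : ℝ) (φ : ℝ → E) : Prop :=
  ∀ t₁ ∈ Icc (0:ℝ) T, ∀ t₂ ∈ Icc (0:ℝ) T, ‖φ t₁ - φ t₂‖ ≤ C * |t₁ - t₂| ^ lam

/-- `λ`-Hölder continuity on `[0,T]`. -/
def IsHolder (T lam : ℝ) (φ : ℝ → E) : Prop := ∃ C : ℝ, IsHolderWith T lam C φ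

/-- `λ`-Hölder bi-continuity with constant `C`. -/
def IsHolderBiWith (T lam C : ℝ) (ψ : ℝ → ℝ → E) : Prop :=
  (∀ u₁ ∈ Icc (0:ℝ) T, ∀ u₂ ∈ Icc (0:ℝ) T, ∀ v ∈ Icc (0:ℝ) T,
      ‖ψ u₂ v - ψ u₁ v‖ ≤ C * |u₂ - u₁| ^ lam) ∧
  ∀ u ∈ Icc (0:ℝ) T, ∀ v₁ ∈ Icc (0:ℝ) T, ∀ v₂ ∈ Icc (0:ℝ) T,
      ‖ψ u v₂ - ψ u v₁‖ ≤ C * |v₂ - v₁| ^ lam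

/-- `λ`-Hölder bi-continuity. -/
def IsHolderBi (T lam : ℝ) (ψ : ℝ → ℝ → E) : Prop := ∃ C : ℝ, IsHolderBiWith T lam C ψ

/-- Strong `λ`-Hölder bi-continuity with constant `C`. -/
def IsStrongHolderBiWith (T lam C : ℝ) (ψ : ℝ → ℝ → E) : Prop :=
  IsHolderBiWith T lam C ψ ∧
  ∀ u₁ ∈ Icc (0:ℝ) T, ∀ u₂ ∈ Icc (0:ℝ) T, ∀ v₁ ∈ Icc (0:ℝ) T, ∀ v₂ ∈ Icc (0:ℝ) T,
    ‖rectInc ψ u₁ u₂ v₁ v₂‖ ≤ C * |u₂ - u₁| ^ lam * |v₂ - v₁| ^ lam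

/-- Strong `λ`-Hölder bi-continuity. -/
def IsStrongHolderBi (T lam : ℝ) (ψ : ℝ → ℝ → E) : Prop :=
  ∃ C : ℝ, IsStrongHolderBiWith T lam C ψ

/-- The covariance function `R(s,t) = ∫_0^{s∧t} K(t,r)K(s,r) dr` of the Volterra process. -/
def covR (K : ℝ → ℝ → ℝ) (s t : ℝ) : ℝ := ∫ r in (0:ℝ)..(min s t), K t r * K s r

/-- The 2D Riemann–Stieltjes sum of `f` against `g` over the grid partition `P × Q`. -/
def RSsum {T : ℝ} (P Q : Partition T) (f g : ℝ → ℝ → ℝ) : ℝ :=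
  ∑ i ∈ Finset.range P.n, ∑ j ∈ Finset.range Q.n,
    f (P.pts i) (Q.pts j) *
      rectInc g (P.pts i) (P.pts (i + 1)) (Q.pts j) (Q.pts (j + 1))

/-!
With `S` the step approximation operator of one partition and `I` the identity, the error operator
is `S ⊗ S - I ⊗ I = (S - I) ⊗ S + I ⊗ (S - I)`. Fix `max α 0 < β < min lam (1 / 2)`.
For a `lam`-Hölder `φ`, the increment of `S φ - φ` from `u` to `r` is at most a multiple of
`(d ^ (lam - β) + w u) * (r - u) ^ β`, where `d` bounds the mesh and the weight
`w u = (u⁺ - u⁻) ^ lam * (u⁺ - u) ^ (-β)` on the cell `[u⁻, u⁺)` of `u` accounts for the jump of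
`S φ` at `u⁺`. Since `α < β`, the factor `(r - u) ^ β` makes the kernel derivative integrable, and
since `β < 1 / 2`, the weight is square integrable with `L²` norm of order `d ^ (lam - β)`.
Strong bi-continuity lets these one-variable estimates be multiplied, and `K T` is square
integrable, so the error is of order `d ^ (lam - β)` in `L²`.
-/

theorem rpow_le_rpow_sub_mul_rpow {x d a b : ℝ} (hx : 0 ≤ x) (hxd : x ≤ d) (ha : 0 < a)
    (hba : b ≤ a) : x ^ a ≤ d ^ (a - b) * x ^ b := by
  rcases hx.eq_or_lt with rfl | hx
  · rw [Real.zero_rpow ha.ne']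
    positivity
  · calc x ^ a = x ^ (a - b) * x ^ b := by rw [← Real.rpow_add hx, sub_add_cancel]
      _ ≤ d ^ (a - b) * x ^ b := by gcongr

theorem intervalIntegrable_rpow_mul_sub_rpow {T a b : ℝ} (hT : 0 < T) (ha : -1 < a)
    (hb : -1 < b) : IntervalIntegrable (fun s : ℝ => s ^ a * (T - s) ^ b) volume 0 T := by
  have hleft {a b : ℝ} (ha : -1 < a) :
      IntervalIntegrable (fun s : ℝ => s ^ a * (T - s) ^ b) volume 0 (T / 2) := by
    refine (intervalIntegral.intervalIntegrable_rpow' ha).mul_continuousOn ?_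
    refine (continuousOn_const.sub continuousOn_id).rpow_const fun s hs => Or.inl ?_
    rw [uIcc_of_le (by positivity)] at hs
    exact (show 0 < T - s by linarith [hs.2]).ne'
  refine (hleft ha).trans ?_
  have hright := ((hleft (b := a) hb).comp_sub_left T).symm
  simpa [mul_comm, sub_half] using hright

theorem norm_intervalIntegral_le_of_norm_le_rpow {f : ℝ → E} {u T M γ : ℝ} (hγ : -1 < γ)
    (huT : u ≤ T) (hf : ∀ r ∈ Ioo u T, ‖f r‖ ≤ M * (r - u) ^ γ) :
    ‖∫ r in u..T, f r‖ ≤ M * ((T - u) ^ (γ + 1) / (γ + 1)) := by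
  have hint : IntervalIntegrable (fun r => M * (r - u) ^ γ) volume u T := by
    have h : IntervalIntegrable (fun r : ℝ => r ^ γ) volume 0 (T - u) :=
      intervalIntegral.intervalIntegrable_rpow' hγ
    simpa using (h.comp_sub_right u).const_mul M
  have hbound : ∀ᵐ r, r ∈ Ioc u T → ‖f r‖ ≤ M * (r - u) ^ γ := by
    filter_upwards [Measure.ae_ne volume T] with r hrT hr
    exact hf r ⟨hr.1, hr.2.lt_of_ne hrT⟩
  calc ‖∫ r in u..T, f r‖ ≤ ∫ r in u..T, M * (r - u) ^ γ :=
        intervalIntegral.norm_integral_le_of_norm_le huT hbound hint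
    _ = M * ((T - u) ^ (γ + 1) / (γ + 1)) := by
        rw [intervalIntegral.integral_const_mul,
          intervalIntegral.integral_comp_sub_right (fun r => r ^ γ) u,
          integral_rpow (Or.inl hγ), sub_self, Real.zero_rpow (by linarith), sub_zero]

theorem setIntegral_setIntegral_le_of_le_mul_add_mul {X Y : Type*} [MeasurableSpace X]
    [MeasurableSpace Y] {μ : Measure X} {ν : Measure Y} {s : Set X} {t : Set Y}
    (hs : MeasurableSet s) (ht : MeasurableSet t) {F : X → Y → ℝ} {f₁ f₂ : X → ℝ}
    {g₁ g₂ : Y → ℝ} (hF : ∀ x y, 0 ≤ F x y) (hf₁ : IntegrableOn f₁ s μ)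
    (hf₂ : IntegrableOn f₂ s μ) (hg₁ : IntegrableOn g₁ t ν) (hg₂ : IntegrableOn g₂ t ν)
    (h : ∀ x ∈ s, ∀ y ∈ t, F x y ≤ f₁ x * g₁ y + f₂ x * g₂ y) :
    ∫ x in s, ∫ y in t, F x y ∂ν ∂μ ≤
      (∫ x in s, f₁ x ∂μ) * (∫ y in t, g₁ y ∂ν) + (∫ x in s, f₂ x ∂μ) * ∫ y in t, g₂ y ∂ν := by
  have hinner : ∀ x ∈ s, ∫ y in t, F x y ∂ν ≤
      f₁ x * (∫ y in t, g₁ y ∂ν) + f₂ x * ∫ y in t, g₂ y ∂ν := fun x hx => by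
    rw [← integral_const_mul, ← integral_const_mul,
      ← integral_add (hg₁.const_mul _) (hg₂.const_mul _)]
    exact integral_mono_of_nonneg (.of_forall (hF x))
      ((hg₁.const_mul _).add (hg₂.const_mul _)) (ae_restrict_of_forall_mem ht (h x hx))
  rw [← integral_mul_const, ← integral_mul_const,
    ← integral_add (hf₁.mul_const _) (hf₂.mul_const _)]
  exact integral_mono_of_nonneg (.of_forall fun x => integral_nonneg (hF x))
    ((hf₁.mul_const _).add (hf₂.mul_const _)) (ae_restrict_of_forall_mem hs hinner)

theorem exists_mul_rpow_sq_lt {a ε : ℝ} (ha : 0 < a) (B : ℝ) (hε : 0 < ε) :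
    ∃ d ∈ Ioc (0 : ℝ) 1, B * (d ^ a) ^ 2 < ε := by
  have hcont : ContinuousAt (fun d : ℝ => B * (d ^ a) ^ 2) 0 :=
    ((Real.continuousAt_rpow_const _ _ (Or.inr ha.le)).pow 2).const_mul B
  have hsmall : ∀ᶠ d in nhds (0 : ℝ), B * (d ^ a) ^ 2 < ε :=
    hcont.eventually_lt continuousAt_const (by simpa [Real.zero_rpow ha.ne'] using hε)
  obtain ⟨d, hd, hd01⟩ :=
    ((hsmall.filter_mono nhdsWithin_le_nhds).and (Ioc_mem_nhdsGT one_pos)).exists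
  exact ⟨d, hd01, hd⟩

theorem CondA.nonneg {T α C : ℝ} {K K' : ℝ → ℝ → ℝ} (hA : CondA T α C K K') (hT : 0 < T) :
    0 ≤ C := by
  have h := (hA.2 (T / 2) T (half_pos hT) (half_lt_self hT) le_rfl).2
  exact nonneg_of_mul_nonneg_left ((abs_nonneg _).trans h)
    (Real.rpow_pos_of_pos (sub_pos.2 (half_lt_self hT)) _)

theorem CondA.memLp_two {T α C : ℝ} {K K' : ℝ → ℝ → ℝ} (hA : CondA T α C K K')
    (hK : Measurable (K T)) (hT : 0 < T) (hα : α < 1 / 2) :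
    MemLp (K T) 2 (volume.restrict (Ioo 0 T)) := by
  set κ : ℝ → ℝ := fun s => C * s ^ (-α) * (T - s) ^ (-α)
  have hκ_sq : EqOn (fun s => C ^ 2 * (s ^ (-(2 * α)) * (T - s) ^ (-(2 * α))))
      (fun s => κ s ^ 2) (Ioo 0 T) := fun s hs => by
    have hexp : -(2 * α) = -α * (2 : ℕ) := by push_cast; ring
    simp only [κ, hexp, Real.rpow_mul_natCast hs.1.le,
      Real.rpow_mul_natCast (sub_nonneg.2 hs.2.le)]
    ring
  have hκ : MemLp κ 2 (volume.restrict (Ioo 0 T)) := by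
    refine (memLp_two_iff_integrable_sq (by fun_prop)).2 ?_
    refine IntegrableOn.congr_fun ?_ hκ_sq measurableSet_Ioo
    exact ((intervalIntegrable_iff_integrableOn_Ioo_of_le hT.le).1
      (intervalIntegrable_rpow_mul_sub_rpow hT (by linarith) (by linarith))).const_mul _
  refine hκ.mono' hK.aestronglyMeasurable (ae_restrict_of_forall_mem measurableSet_Ioo ?_)
  exact fun s hs => hA.1 s T hs.1 hs.2 le_rfl

/-- The mass `∫ₛᵀ C (r - s) ^ (β - α - 1) dr` of the singular weight which arises when the kernel
derivative of Condition (A) acts on a `β`-Hölder increment. -/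
def singularMass (T α β C s : ℝ) : ℝ := C * ((T - s) ^ (β - α) / (β - α))

theorem singularMass_mem_Icc {T α β C s : ℝ} (hC : 0 ≤ C) (hαβ : α < β) (hs : s ∈ Icc 0 T) :
    singularMass T α β C s ∈ Icc 0 (singularMass T α β C 0) := by
  have : 0 < β - α := sub_pos.2 hαβ
  have : 0 ≤ T - s := sub_nonneg.2 hs.2
  unfold singularMass
  refine ⟨by positivity, ?_⟩
  gcongr
  exact hs.1

theorem norm_AK_le {T α β C M u : ℝ} {K K' : ℝ → ℝ → ℝ} (hA : CondA T α C K K') (hαβ : α < β)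
    (hu : u ∈ Ioo 0 T) {φ : ℝ → E} (hφ : ∀ r ∈ Ioo u T, ‖φ r - φ u‖ ≤ M * (r - u) ^ β) :
    ‖AK T K' φ u‖ ≤ M * singularMass T α β C u := by
  have hbound : ∀ r ∈ Ioo u T, ‖K' r u • (φ r - φ u)‖ ≤ M * C * (r - u) ^ (β - α - 1) := by
    intro r hr
    have hK' := (hA.2 u r hu.1 hr.1 hr.2.le).2
    calc ‖K' r u • (φ r - φ u)‖ = |K' r u| * ‖φ r - φ u‖ := norm_smul _ _
      _ ≤ C * (r - u) ^ (-(α + 1)) * (M * (r - u) ^ β) :=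
          mul_le_mul hK' (hφ r hr) (norm_nonneg _) ((abs_nonneg _).trans hK')
      _ = M * C * (r - u) ^ (β - α - 1) := by
          rw [show β - α - 1 = -(α + 1) + β by ring, Real.rpow_add (sub_pos.2 hr.1)]
          ring
  have h := norm_intervalIntegral_le_of_norm_le_rpow (by linarith) hu.2.le hbound
  rwa [sub_add_cancel, mul_assoc] at h

theorem norm_BK_le {T α β C D u v : ℝ} {K K' : ℝ → ℝ → ℝ} (hA : CondA T α C K K') (hαβ : α < β)
    (hu : u ∈ Ioo 0 T) (hv : v ∈ Ioo 0 T) {f : ℝ → ℝ → E}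
    (hf : ∀ r ∈ Ioo u T, ∀ s ∈ Ioo v T,
      ‖rectInc f u r v s‖ ≤ D * ((r - u) ^ β * (s - v) ^ β)) :
    ‖BK T K' f u v‖ ≤ D * (singularMass T α β C u * singularMass T α β C v) := by
  have hinner : ∀ s ∈ Ioo v T, ‖∫ r in u..T, (K' r u * K' s v) • rectInc f u r v s‖ ≤
      D * C * singularMass T α β C u * (s - v) ^ (β - α - 1) := by
    intro s hs
    have hbound : ∀ r ∈ Ioo u T, ‖(K' r u * K' s v) • rectInc f u r v s‖ ≤
        D * C * (s - v) ^ (β - α - 1) * C * (r - u) ^ (β - α - 1) := by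
      intro r hr
      have hK'u := (hA.2 u r hu.1 hr.1 hr.2.le).2
      have hK'v := (hA.2 v s hv.1 hs.1 hs.2.le).2
      have hK'v₀ := (abs_nonneg _).trans hK'v
      calc ‖(K' r u * K' s v) • rectInc f u r v s‖
          = |K' r u| * |K' s v| * ‖rectInc f u r v s‖ := by
            rw [norm_smul, Real.norm_eq_abs, abs_mul]
        _ ≤ C * (r - u) ^ (-(α + 1)) * (C * (s - v) ^ (-(α + 1))) *
              (D * ((r - u) ^ β * (s - v) ^ β)) := by
            have hK'u₀ := (abs_nonneg _).trans hK'u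
            gcongr
            exact hf r hr s hs
        _ = D * C * (s - v) ^ (β - α - 1) * C * (r - u) ^ (β - α - 1) := by
            rw [show β - α - 1 = -(α + 1) + β by ring, Real.rpow_add (sub_pos.2 hr.1),
              Real.rpow_add (sub_pos.2 hs.1)]
            ring
    have h := norm_intervalIntegral_le_of_norm_le_rpow (by linarith) hu.2.le hbound
    rw [sub_add_cancel] at h
    exact h.trans_eq (by unfold singularMass; ring)
  have h := norm_intervalIntegral_le_of_norm_le_rpow (by linarith) hv.2.le hinner
  rw [sub_add_cancel] at h
  exact h.trans_eq (by unfold singularMass; ring)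

section

variable {F : Type*} [NormedAddCommGroup F]

/-- Forward Hölder control of `f` from the corner `(u, v)`: `M` bounds the value there, `A` and `B`
the `β`-Hölder increments in the first and in the second variable, `D` the rectangular ones. Only
the increments towards `T` enter `KstarT T K K' f u v`; the endpoint `T` itself is left out
because step approximations vanish there. -/
structure CornerHolder (T β M A B D : ℝ) (f : ℝ → ℝ → F) (u v : ℝ) : Prop where
  norm_le : ‖f u v‖ ≤ M
  left : ∀ r ∈ Ioo u T, ‖f r v - f u v‖ ≤ A * (r - u) ^ β
  right : ∀ s ∈ Ioo v T, ‖f u s - f u v‖ ≤ B * (s - v) ^ β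
  rect : ∀ r ∈ Ioo u T, ∀ s ∈ Ioo v T,
    ‖rectInc f u r v s‖ ≤ D * ((r - u) ^ β * (s - v) ^ β)

namespace CornerHolder

variable {T β M A B D M' A' B' D' u v : ℝ} {f g : ℝ → ℝ → F}

theorem add (hf : CornerHolder T β M A B D f u v) (hg : CornerHolder T β M' A' B' D' g u v) :
    CornerHolder T β (M + M') (A + A') (B + B') (D + D') (fun x y => f x y + g x y) u v where
  norm_le := norm_add_le_of_le hf.norm_le hg.norm_le
  left r hr := by
    rw [add_sub_add_comm, add_mul]
    exact norm_add_le_of_le (hf.left r hr) (hg.left r hr)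
  right s hs := by
    rw [add_sub_add_comm, add_mul]
    exact norm_add_le_of_le (hf.right s hs) (hg.right s hs)
  rect r hr s hs := by
    have hadd : rectInc (fun x y => f x y + g x y) u r v s =
        rectInc f u r v s + rectInc g u r v s := by
      simp only [rectInc]
      abel
    rw [hadd, add_mul]
    exact norm_add_le_of_le (hf.rect r hr s hs) (hg.rect r hr s hs)

theorem swap (hf : CornerHolder T β M A B D f u v) :
    CornerHolder T β M B A D (fun x y => f y x) v u where
  norm_le := hf.norm_le
  left := hf.right
  right := hf.left
  rect s hs r hr := by
    have hswap : rectInc (fun x y => f y x) v s u r = rectInc f u r v s := by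
      simp only [rectInc]
      abel
    rw [hswap, mul_comm (_ ^ β)]
    exact hf.rect r hr s hs

theorem congr (hf : CornerHolder T β M A B D f u v) (hu : u < T) (hv : v < T)
    (h : ∀ r ∈ Ico u T, ∀ s ∈ Ico v T, g r s = f r s) : CornerHolder T β M A B D g u v where
  norm_le := by simpa only [h u ⟨le_rfl, hu⟩ v ⟨le_rfl, hv⟩] using hf.norm_le
  left r hr := by
    simpa only [h r ⟨hr.1.le, hr.2⟩ v ⟨le_rfl, hv⟩, h u ⟨le_rfl, hu⟩ v ⟨le_rfl, hv⟩]
      using hf.left r hr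
  right s hs := by
    simpa only [h u ⟨le_rfl, hu⟩ s ⟨hs.1.le, hs.2⟩, h u ⟨le_rfl, hu⟩ v ⟨le_rfl, hv⟩]
      using hf.right s hs
  rect r hr s hs := by
    have hu' : u ∈ Ico u T := ⟨le_rfl, hu⟩
    have hv' : v ∈ Ico v T := ⟨le_rfl, hv⟩
    have hr' : r ∈ Ico u T := ⟨hr.1.le, hr.2⟩
    have hs' : s ∈ Ico v T := ⟨hs.1.le, hs.2⟩
    simpa only [rectInc, h u hu' v hv', h r hr' s hs', h u hu' s hs', h r hr' v hv']
      using hf.rect r hr s hs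

theorem norm_KstarT_le {α C : ℝ} {K K' : ℝ → ℝ → ℝ} {f : ℝ → ℝ → E}
    (hf : CornerHolder T β M A B D f u v) (hA : CondA T α C K K') (hαβ : α < β)
    (hu : u ∈ Ioo 0 T) (hv : v ∈ Ioo 0 T) :
    ‖KstarT T K K' f u v‖ ≤ |K T u| * |K T v| * M + |K T v| * (A * singularMass T α β C u) +
      |K T u| * (B * singularMass T α β C v) +
      D * (singularMass T α β C u * singularMass T α β C v) := by
  refine norm_add_le_of_le (norm_add_le_of_le (norm_add_le_of_le ?_ ?_) ?_)
    (norm_BK_le hA hαβ hu hv hf.rect)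
  · rw [norm_smul, Real.norm_eq_abs, abs_mul]
    gcongr
    exact hf.norm_le
  · rw [norm_smul, Real.norm_eq_abs]
    gcongr
    exact norm_AK_le hA hαβ hu hf.left
  · rw [norm_smul, Real.norm_eq_abs]
    gcongr
    exact norm_AK_le hA hαβ hv hf.right

end CornerHolder

namespace Partition

variable {T : ℝ} (P : Partition T)

theorem monotoneOn_pts : MonotoneOn P.pts (Iic P.n) :=
  monotoneOn_of_le_add_one ordConnected_Iic fun i _ _ hi => (P.lt i hi).le

open Classical in
/-- The index of the cell `[pts i, pts (i + 1))` containing `u`, for `u ∈ [0, T)`. It is `0` to the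
left of that interval and the index of the last cell to the right of it. -/
def cellIndex (u : ℝ) : ℕ := Nat.findGreatest (fun i => P.pts i ≤ u) (P.n - 1)

/-- The left endpoint of the cell containing `u`. -/
def leftPt (u : ℝ) : ℝ := P.pts (P.cellIndex u)

/-- The right endpoint of the cell containing `u`. -/
def rightPt (u : ℝ) : ℝ := P.pts (P.cellIndex u + 1)

theorem cellIndex_lt (u : ℝ) : P.cellIndex u < P.n :=
  (Nat.findGreatest_le _).trans_lt (Nat.sub_lt P.n_pos one_pos)

theorem monotone_cellIndex : Monotone P.cellIndex := fun _ _ huv =>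
  Nat.findGreatest_mono_left (fun _ hi => hi.trans huv) _

theorem leftPt_nonneg (u : ℝ) : 0 ≤ P.leftPt u :=
  P.first.ge.trans (P.monotoneOn_pts P.n.zero_le (P.cellIndex_lt u).le (Nat.zero_le _))

theorem rightPt_le (u : ℝ) : P.rightPt u ≤ T :=
  (P.monotoneOn_pts (P.cellIndex_lt u) self_mem_Iic (P.cellIndex_lt u)).trans_eq P.last

theorem leftPt_lt_rightPt (u : ℝ) : P.leftPt u < P.rightPt u := P.lt _ (P.cellIndex_lt u)

theorem leftPt_mem_Icc (u : ℝ) : P.leftPt u ∈ Icc 0 T :=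
  ⟨P.leftPt_nonneg u, (P.leftPt_lt_rightPt u).le.trans (P.rightPt_le u)⟩

theorem sub_le_mesh {i : ℕ} (hi : i < P.n) : P.pts (i + 1) - P.pts i ≤ P.mesh :=
  Finset.le_sup' (fun i => P.pts (i + 1) - P.pts i) (Finset.mem_range.2 hi)

theorem leftPt_le {u : ℝ} (hu : 0 ≤ u) : P.leftPt u ≤ u := by
  classical
  exact Nat.findGreatest_spec (P := fun i => P.pts i ≤ u) (Nat.zero_le _) (P.first.trans_le hu)

theorem lt_rightPt {u : ℝ} (hu : u < T) : u < P.rightPt u := by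
  classical
  by_contra! h
  rcases (Nat.succ_le_of_lt (P.cellIndex_lt u)).eq_or_lt with hlast | hlt
  · exact (h.trans_lt hu).ne ((congrArg P.pts hlast).trans P.last)
  · exact Nat.findGreatest_is_greatest (Nat.lt_succ_self (P.cellIndex u)) (by omega) h

theorem sub_leftPt_le_mesh {u : ℝ} (hu : u < T) : u - P.leftPt u ≤ P.mesh :=
  (sub_le_sub_right (P.lt_rightPt hu).le _).trans (P.sub_le_mesh (P.cellIndex_lt u))

theorem cellIndex_eq_iff {i : ℕ} (hi : i < P.n) {u : ℝ} (hu : u ∈ Ico 0 T) :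
    P.cellIndex u = i ↔ u ∈ Ico (P.pts i) (P.pts (i + 1)) := by
  refine ⟨?_, fun h => le_antisymm (not_lt.1 fun hlt => ?_) (not_lt.1 fun hlt => ?_)⟩
  · rintro rfl
    exact ⟨P.leftPt_le hu.1, P.lt_rightPt hu.2⟩
  · exact (h.2.trans_le (P.monotoneOn_pts hi (P.cellIndex_lt u).le hlt)).not_ge
      (P.leftPt_le hu.1)
  · exact ((P.lt_rightPt hu.2).trans_le (P.monotoneOn_pts (P.cellIndex_lt u) hi.le hlt)).not_ge
      h.1

theorem leftPt_eq_or_rightPt_le {u r : ℝ} (hur : u ≤ r) :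
    P.leftPt r = P.leftPt u ∨ P.rightPt u ≤ P.leftPt r := by
  rcases (P.monotone_cellIndex hur).eq_or_lt with h | h
  · exact Or.inl (congrArg P.pts h.symm)
  · exact Or.inr (P.monotoneOn_pts (P.cellIndex_lt u) (P.cellIndex_lt r).le h)

end Partition

theorem step2_eq {T : ℝ} (P Q : Partition T) (ψ : ℝ → ℝ → F) {u v : ℝ} (hu : u ∈ Ico 0 T)
    (hv : v ∈ Ico 0 T) : step2 P Q ψ u v = ψ (P.leftPt u) (Q.leftPt v) := by
  have hcell : ∀ i ∈ Finset.range P.n, ∀ j ∈ Finset.range Q.n,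
      (Ico (P.pts i) (P.pts (i + 1)) ×ˢ Ico (Q.pts j) (Q.pts (j + 1))).indicator
          (fun _ => ψ (P.pts i) (Q.pts j)) (u, v) =
        if P.cellIndex u = i then if Q.cellIndex v = j then ψ (P.pts i) (Q.pts j) else 0
          else 0 := by
    intro i hi j hj
    rw [← ite_and]
    simp only [indicator, mem_prod, P.cellIndex_eq_iff (Finset.mem_range.1 hi) hu,
      Q.cellIndex_eq_iff (Finset.mem_range.1 hj) hv]
  calc step2 P Q ψ u v
      = ∑ i ∈ Finset.range P.n, ∑ j ∈ Finset.range Q.n, if P.cellIndex u = i then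
          if Q.cellIndex v = j then ψ (P.pts i) (Q.pts j) else 0 else 0 :=
        Finset.sum_congr rfl fun i hi => Finset.sum_congr rfl fun j hj => hcell i hi j hj
    _ = ψ (P.leftPt u) (Q.leftPt v) := by
        simp [Finset.sum_ite_irrel, P.cellIndex_lt u, Q.cellIndex_lt v, Partition.leftPt]

theorem IsHolderWith.nonneg {T lam M : ℝ} {φ : ℝ → F} (hφ : IsHolderWith T lam M φ)
    (hT : 0 < T) : 0 ≤ M :=
  nonneg_of_mul_nonneg_left ((norm_nonneg _).trans (hφ T ⟨hT.le, le_rfl⟩ 0 ⟨le_rfl, hT.le⟩))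
    (Real.rpow_pos_of_pos (by simpa using hT.ne') _)

namespace IsStrongHolderBiWith

variable {T lam C : ℝ} {ψ : ℝ → ℝ → F}

theorem swap (hψ : IsStrongHolderBiWith T lam C ψ) :
    IsStrongHolderBiWith T lam C (fun x y => ψ y x) := by
  refine ⟨⟨fun u₁ hu₁ u₂ hu₂ v hv => hψ.1.2 v hv u₁ hu₁ u₂ hu₂,
    fun u hu v₁ hv₁ v₂ hv₂ => hψ.1.1 v₁ hv₁ v₂ hv₂ u hu⟩, fun u₁ hu₁ u₂ hu₂ v₁ hv₁ v₂ hv₂ => ?_⟩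
  have hswap : rectInc (fun x y => ψ y x) u₁ u₂ v₁ v₂ = rectInc ψ v₁ v₂ u₁ u₂ := by
    simp only [rectInc]
    abel
  rw [hswap, mul_right_comm]
  exact hψ.2 v₁ hv₁ v₂ hv₂ u₁ hu₁ u₂ hu₂

theorem isHolderWith_left (hψ : IsStrongHolderBiWith T lam C ψ) {y : ℝ} (hy : y ∈ Icc 0 T) :
    IsHolderWith T lam C (fun x => ψ x y) :=
  fun x₁ hx₁ x₂ hx₂ => hψ.1.1 x₂ hx₂ x₁ hx₁ y hy

theorem isHolderWith_left_sub (hψ : IsStrongHolderBiWith T lam C ψ) {y₁ y₂ : ℝ}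
    (hy₁ : y₁ ∈ Icc 0 T) (hy₂ : y₂ ∈ Icc 0 T) :
    IsHolderWith T lam (C * |y₂ - y₁| ^ lam) (fun x => ψ x y₂ - ψ x y₁) := by
  intro x₁ hx₁ x₂ hx₂
  have hrect : ψ x₁ y₂ - ψ x₁ y₁ - (ψ x₂ y₂ - ψ x₂ y₁) = rectInc ψ x₂ x₁ y₁ y₂ := by
    simp only [rectInc]
    abel
  rw [hrect, mul_right_comm]
  exact hψ.2 x₂ hx₂ x₁ hx₁ y₁ hy₁ y₂ hy₂

end IsStrongHolderBiWith

namespace Partition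

variable {T : ℝ} (P : Partition T) {lam β d u r : ℝ}

/-- The weight `(u⁺ - u⁻) ^ lam * (u⁺ - u) ^ (-β)` on the cell `[u⁻, u⁺)` containing `u`. It
measures the jump of a step approximation of a `lam`-Hölder function at `u⁺` in the `β`-Hölder
scale based at `u`. -/
def cellWeight (lam β u : ℝ) : ℝ :=
  (P.rightPt u - P.leftPt u) ^ lam * (P.rightPt u - u) ^ (-β)

theorem cellWeight_nonneg (hu : u < T) : 0 ≤ P.cellWeight lam β u :=
  mul_nonneg (Real.rpow_nonneg (sub_pos.2 (P.leftPt_lt_rightPt u)).le _)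
    (Real.rpow_nonneg (sub_pos.2 (P.lt_rightPt hu)).le _)

theorem measurable_cellWeight : Measurable (P.cellWeight lam β) := by
  have hcell : Measurable P.cellIndex := P.monotone_cellIndex.measurable
  have hleft : Measurable P.leftPt := measurable_from_top.comp hcell
  have hright : Measurable P.rightPt :=
    (measurable_from_top (f := fun i => P.pts (i + 1))).comp hcell
  unfold cellWeight
  fun_prop

theorem rpow_sub_leftPt_le (hlam : 0 ≤ lam) (hβ : 0 ≤ β) (hu : u ∈ Ico 0 T)
    (hr : P.rightPt u ≤ r) : (u - P.leftPt u) ^ lam ≤ P.cellWeight lam β u * (r - u) ^ β := by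
  have hleft : 0 ≤ u - P.leftPt u := sub_nonneg.2 (P.leftPt_le hu.1)
  have hright : 0 < P.rightPt u - u := sub_pos.2 (P.lt_rightPt hu.2)
  calc (u - P.leftPt u) ^ lam ≤ (P.rightPt u - P.leftPt u) ^ lam := by
        gcongr
        exact (P.lt_rightPt hu.2).le
    _ = P.cellWeight lam β u * (P.rightPt u - u) ^ β := by
        rw [cellWeight, mul_assoc, ← Real.rpow_add hright, neg_add_cancel, Real.rpow_zero, mul_one]
    _ ≤ P.cellWeight lam β u * (r - u) ^ β := by
        have := P.cellWeight_nonneg (lam := lam) (β := β) hu.2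
        gcongr

theorem abs_leftPt_sub_leftPt_rpow_le (hβ : 0 ≤ β) (hβlam : β < lam) (hlam : lam ≤ 1)
    (hu : 0 ≤ u) (hur : u ≤ r) (hr : r < T) :
    |P.leftPt r - P.leftPt u| ^ lam ≤
      (T ^ (lam - β) + P.cellWeight lam β u) * (r - u) ^ β := by
  have hT : 0 ≤ T := hu.trans (hur.trans hr.le)
  have hlam₀ : 0 < lam := hβ.trans_lt hβlam
  have hru : 0 ≤ r - u := sub_nonneg.2 hur
  have huT : u < T := hur.trans_lt hr
  rcases P.leftPt_eq_or_rightPt_le hur with heq | hjump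
  · rw [heq, sub_self, abs_zero, Real.zero_rpow hlam₀.ne']
    have := P.cellWeight_nonneg (lam := lam) (β := β) huT
    positivity
  · have hleftr := P.leftPt_le (hu.trans hur)
    have hleft : P.leftPt u ≤ P.leftPt r := (P.leftPt_lt_rightPt u).le.trans hjump
    calc |P.leftPt r - P.leftPt u| ^ lam ≤ ((r - u) + (u - P.leftPt u)) ^ lam := by
          rw [abs_of_nonneg (sub_nonneg.2 hleft)]
          refine Real.rpow_le_rpow (sub_nonneg.2 hleft) ?_ hlam₀.le
          linarith
      _ ≤ (r - u) ^ lam + (u - P.leftPt u) ^ lam :=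
          Real.rpow_add_le_add_rpow hru (sub_nonneg.2 (P.leftPt_le hu)) hlam₀.le hlam
      _ ≤ T ^ (lam - β) * (r - u) ^ β + P.cellWeight lam β u * (r - u) ^ β :=
          add_le_add (rpow_le_rpow_sub_mul_rpow hru (by linarith) hlam₀ hβlam.le)
            (P.rpow_sub_leftPt_le hlam₀.le hβ ⟨hu, huT⟩ (hjump.trans hleftr))
      _ = _ := (add_mul _ _ _).symm

end Partition

namespace IsHolderWith

variable {T lam β d M u r : ℝ} {φ : ℝ → F}

theorem norm_leftPt_sub_le (hφ : IsHolderWith T lam M φ) (P : Partition T) (hu : u ∈ Ico 0 T) :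
    ‖φ (P.leftPt u) - φ u‖ ≤ M * (u - P.leftPt u) ^ lam := by
  have h := hφ _ (P.leftPt_mem_Icc u) u ⟨hu.1, hu.2.le⟩
  rwa [abs_sub_comm, abs_of_nonneg (sub_nonneg.2 (P.leftPt_le hu.1))] at h

theorem norm_leftPt_sub_le_rpow (hφ : IsHolderWith T lam M φ) {P : Partition T} (hβ : 0 ≤ β)
    (hβlam : β < lam) (hd : P.mesh ≤ d) (hd1 : d ≤ 1) (hu : u ∈ Ico 0 T) :
    ‖φ (P.leftPt u) - φ u‖ ≤ M * d ^ (lam - β) := by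
  have hM : 0 ≤ M := hφ.nonneg (hu.1.trans_lt hu.2)
  have hleft : 0 ≤ u - P.leftPt u := sub_nonneg.2 (P.leftPt_le hu.1)
  have hmesh : u - P.leftPt u ≤ d := (P.sub_leftPt_le_mesh hu.2).trans hd
  have hpow : (u - P.leftPt u) ^ lam ≤ d ^ (lam - β) :=
    calc (u - P.leftPt u) ^ lam ≤ d ^ (lam - β) * (u - P.leftPt u) ^ β :=
          rpow_le_rpow_sub_mul_rpow hleft hmesh (hβ.trans_lt hβlam) hβlam.le
      _ ≤ d ^ (lam - β) := mul_le_of_le_one_right (Real.rpow_nonneg (hleft.trans hmesh) _)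
          (Real.rpow_le_one hleft (hmesh.trans hd1) hβ)
  exact (hφ.norm_leftPt_sub_le P hu).trans (by gcongr)

theorem norm_leftPt_sub_sub_le (hφ : IsHolderWith T lam M φ) {P : Partition T} (hβ : 0 ≤ β)
    (hβlam : β < lam) (hd : P.mesh ≤ d) (hu : u ∈ Ico 0 T) (hr : r ∈ Ioo u T) :
    ‖(φ (P.leftPt r) - φ r) - (φ (P.leftPt u) - φ u)‖ ≤
      M * (d ^ (lam - β) + P.cellWeight lam β u) * (r - u) ^ β := by
  have hM : 0 ≤ M := hφ.nonneg (hu.1.trans_lt hu.2)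
  have hlam : 0 < lam := hβ.trans_lt hβlam
  have hr₀ : r ∈ Ico 0 T := ⟨hu.1.trans hr.1.le, hr.2⟩
  have hru : 0 ≤ r - u := (sub_pos.2 hr.1).le
  have hleft : 0 ≤ r - P.leftPt r := sub_nonneg.2 (P.leftPt_le hr₀.1)
  have hmesh : r - P.leftPt r ≤ d := (P.sub_leftPt_le_mesh hr.2).trans hd
  have hw := P.cellWeight_nonneg (lam := lam) (β := β) hu.2
  have hη : 0 ≤ d ^ (lam - β) := Real.rpow_nonneg (hleft.trans hmesh) _
  rw [mul_assoc, add_mul]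
  rcases P.leftPt_eq_or_rightPt_le hr.1.le with heq | hjump
  · have hru_le : r - u ≤ d := by linarith [P.leftPt_le hu.1]
    calc ‖(φ (P.leftPt r) - φ r) - (φ (P.leftPt u) - φ u)‖ = ‖φ u - φ r‖ := by
          rw [heq, sub_sub_sub_cancel_left]
      _ ≤ M * (r - u) ^ lam := by
          have h := hφ u ⟨hu.1, hu.2.le⟩ r ⟨hr₀.1, hr.2.le⟩
          rwa [abs_sub_comm, abs_of_nonneg hru] at h
      _ ≤ M * (d ^ (lam - β) * (r - u) ^ β + P.cellWeight lam β u * (r - u) ^ β) := by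
          gcongr
          exact (rpow_le_rpow_sub_mul_rpow hru hru_le hlam hβlam.le).trans
            (le_add_of_nonneg_right (by positivity))
  · have hstep : r - P.leftPt r ≤ r - u := by linarith [P.lt_rightPt hu.2]
    calc ‖(φ (P.leftPt r) - φ r) - (φ (P.leftPt u) - φ u)‖
        ≤ M * (r - P.leftPt r) ^ lam + M * (u - P.leftPt u) ^ lam :=
          norm_sub_le_of_le (hφ.norm_leftPt_sub_le P hr₀) (hφ.norm_leftPt_sub_le P hu)
      _ ≤ M * (d ^ (lam - β) * (r - u) ^ β) +
            M * (P.cellWeight lam β u * (r - u) ^ β) := by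
          gcongr
          · exact (rpow_le_rpow_sub_mul_rpow hleft hmesh hlam hβlam.le).trans (by gcongr)
          · exact P.rpow_sub_leftPt_le hlam.le hβ hu (by linarith)
      _ = _ := (mul_add _ _ _).symm

end IsHolderWith

namespace IsStrongHolderBiWith

variable {T lam β d C : ℝ} {ψ : ℝ → ℝ → F}

theorem cornerHolder_leftPt_sub (hψ : IsStrongHolderBiWith T lam C ψ) {P : Partition T}
    (hβ : 0 ≤ β) (hβlam : β < lam) (hd : P.mesh ≤ d) (hd1 : d ≤ 1) {u v : ℝ} (hu : u ∈ Ico 0 T)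
    (hv : v < T) {τ : ℝ → ℝ} (hτ : ∀ s ∈ Ico v T, τ s ∈ Icc 0 T) {ℓ : ℝ}
    (hℓ : ∀ s ∈ Ioo v T, |τ s - τ v| ^ lam ≤ ℓ * (s - v) ^ β) :
    CornerHolder T β (C * d ^ (lam - β)) (C * (d ^ (lam - β) + P.cellWeight lam β u))
      (C * ℓ * d ^ (lam - β)) (C * ℓ * (d ^ (lam - β) + P.cellWeight lam β u))
      (fun x y => ψ (P.leftPt x) (τ y) - ψ x (τ y)) u v := by
  have hτv : τ v ∈ Icc 0 T := hτ v ⟨le_rfl, hv⟩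
  have hslice := hψ.isHolderWith_left hτv
  have hC : 0 ≤ C := hslice.nonneg (hu.1.trans_lt hu.2)
  have hη : 0 ≤ d ^ (lam - β) := Real.rpow_nonneg
    (((sub_nonneg.2 (P.leftPt_le hu.1)).trans (P.sub_leftPt_le_mesh hu.2)).trans hd) _
  have hw := P.cellWeight_nonneg (lam := lam) (β := β) hu.2
  refine ⟨hslice.norm_leftPt_sub_le_rpow hβ hβlam hd hd1 hu,
    fun r hr => hslice.norm_leftPt_sub_sub_le hβ hβlam hd hu hr, fun s hs => ?_,
    fun r hr s hs => ?_⟩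
  · have h := (hψ.isHolderWith_left_sub hτv (hτ s ⟨hs.1.le, hs.2⟩)).norm_leftPt_sub_le_rpow
      hβ hβlam hd hd1 hu
    rw [sub_sub_sub_comm]
    calc _ ≤ C * |τ s - τ v| ^ lam * d ^ (lam - β) := h
      _ ≤ C * (ℓ * (s - v) ^ β) * d ^ (lam - β) := by
          gcongr
          exact hℓ s hs
      _ = C * ℓ * d ^ (lam - β) * (s - v) ^ β := by ring
  · have h := (hψ.isHolderWith_left_sub hτv (hτ s ⟨hs.1.le, hs.2⟩)).norm_leftPt_sub_sub_le
      hβ hβlam hd hu hr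
    have hru : 0 ≤ r - u := (sub_pos.2 hr.1).le
    have hrect : rectInc (fun x y => ψ (P.leftPt x) (τ y) - ψ x (τ y)) u r v s =
        (ψ (P.leftPt r) (τ s) - ψ (P.leftPt r) (τ v) - (ψ r (τ s) - ψ r (τ v))) -
          (ψ (P.leftPt u) (τ s) - ψ (P.leftPt u) (τ v) - (ψ u (τ s) - ψ u (τ v))) := by
      simp only [rectInc]
      abel
    calc ‖rectInc (fun x y => ψ (P.leftPt x) (τ y) - ψ x (τ y)) u r v s‖
        ≤ C * |τ s - τ v| ^ lam * (d ^ (lam - β) + P.cellWeight lam β u) * (r - u) ^ β :=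
          hrect ▸ h
      _ ≤ C * (ℓ * (s - v) ^ β) * (d ^ (lam - β) + P.cellWeight lam β u) * (r - u) ^ β := by
          gcongr
          exact hℓ s hs
      _ = _ := by ring

theorem cornerHolder_step2_sub (hψ : IsStrongHolderBiWith T lam C ψ) {P Q : Partition T}
    (hβ : 0 ≤ β) (hβlam : β < lam) (hlam : lam ≤ 1) (hP : P.mesh ≤ d) (hQ : Q.mesh ≤ d)
    (hd1 : d ≤ 1) {u v : ℝ} (hu : u ∈ Ico 0 T) (hv : v ∈ Ico 0 T) :
    CornerHolder T β (C * d ^ (lam - β) + C * d ^ (lam - β))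
      (C * (d ^ (lam - β) + P.cellWeight lam β u) + C * T ^ (lam - β) * d ^ (lam - β))
      (C * (T ^ (lam - β) + Q.cellWeight lam β v) * d ^ (lam - β) +
        C * (d ^ (lam - β) + Q.cellWeight lam β v))
      (C * (T ^ (lam - β) + Q.cellWeight lam β v) * (d ^ (lam - β) + P.cellWeight lam β u) +
        C * T ^ (lam - β) * (d ^ (lam - β) + Q.cellWeight lam β v))
      (fun x y => step2 P Q ψ x y - ψ x y) u v := by
  have hfirst := hψ.cornerHolder_leftPt_sub hβ hβlam hP hd1 hu hv.2
    (fun s _ => Q.leftPt_mem_Icc s)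
    (fun s hs => Q.abs_leftPt_sub_leftPt_rpow_le hβ hβlam hlam hv.1 hs.1.le hs.2)
  have hid : ∀ r ∈ Ioo u T, |r - u| ^ lam ≤ T ^ (lam - β) * (r - u) ^ β := fun r hr => by
    rw [abs_of_pos (sub_pos.2 hr.1)]
    exact rpow_le_rpow_sub_mul_rpow (sub_pos.2 hr.1).le (by linarith [hu.1, hr.2])
      (hβ.trans_lt hβlam) hβlam.le
  have hsecond := (hψ.swap.cornerHolder_leftPt_sub hβ hβlam hQ hd1 hv hu.2 (τ := id)
    (fun r hr => ⟨hu.1.trans hr.1, hr.2.le⟩) hid).swap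
  refine (hfirst.add hsecond).congr hu.2 hv.2 fun r hr s hs => ?_
  rw [step2_eq P Q ψ ⟨hu.1.trans hr.1, hr.2⟩ ⟨hv.1.trans hs.1, hs.2⟩]
  exact (sub_add_sub_cancel _ _ _).symm

end IsStrongHolderBiWith

end

namespace Partition

variable {T : ℝ} (P : Partition T)

/-- The factor contributed by one variable to the bound for `𝒦* ⊗ 𝒦*` of the step error. The level
`m` is the size of the error in this variable: a power of the mesh for the variable in which `ψ` is
compared with its step approximation, and `1` for the other one. -/
def errorWeight (K : ℝ → ℝ → ℝ) (α β lam C m u : ℝ) : ℝ :=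
  m * (|K T u| + singularMass T α β C 0 * (1 + T ^ (lam - β))) +
    singularMass T α β C 0 * P.cellWeight lam β u

theorem errorWeight_nonneg {K : ℝ → ℝ → ℝ} {α β lam C m u : ℝ} (hT : 0 ≤ T) (hm : 0 ≤ m)
    (hc : 0 ≤ singularMass T α β C 0) (hu : u < T) : 0 ≤ P.errorWeight K α β lam C m u := by
  have hw := P.cellWeight_nonneg (lam := lam) (β := β) hu
  unfold errorWeight
  positivity

theorem level_mul_abs_add_le_errorWeight {K : ℝ → ℝ → ℝ} {α β lam C m u γ : ℝ} (hT : 0 ≤ T)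
    (hm : 0 ≤ m) (hγ : γ ∈ Icc 0 (singularMass T α β C 0)) (hu : u < T) :
    m * |K T u| + γ * (m + P.cellWeight lam β u) ≤ P.errorWeight K α β lam C m u := by
  have hc : 0 ≤ singularMass T α β C 0 := hγ.1.trans hγ.2
  have hw := P.cellWeight_nonneg (lam := lam) (β := β) hu
  calc m * |K T u| + γ * (m + P.cellWeight lam β u)
      ≤ m * |K T u| + singularMass T α β C 0 * (m + P.cellWeight lam β u) := by
        gcongr
        exact hγ.2
    _ ≤ m * |K T u| + singularMass T α β C 0 * (m + P.cellWeight lam β u) +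
          m * (singularMass T α β C 0 * T ^ (lam - β)) := le_add_of_nonneg_right (by positivity)
    _ = P.errorWeight K α β lam C m u := by
        unfold errorWeight
        ring

theorem abs_add_le_errorWeight_one {K : ℝ → ℝ → ℝ} {α β lam C u γ : ℝ} (hT : 0 ≤ T)
    (hγ : γ ∈ Icc 0 (singularMass T α β C 0)) (hu : u < T) :
    |K T u| + γ * (T ^ (lam - β) + P.cellWeight lam β u) ≤ P.errorWeight K α β lam C 1 u := by
  have hc : 0 ≤ singularMass T α β C 0 := hγ.1.trans hγ.2
  have hw := P.cellWeight_nonneg (lam := lam) (β := β) hu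
  calc |K T u| + γ * (T ^ (lam - β) + P.cellWeight lam β u)
      ≤ |K T u| + singularMass T α β C 0 * (T ^ (lam - β) + P.cellWeight lam β u) := by
        gcongr
        exact hγ.2
    _ ≤ |K T u| + singularMass T α β C 0 * (T ^ (lam - β) + P.cellWeight lam β u) +
          singularMass T α β C 0 := le_add_of_nonneg_right hc
    _ = P.errorWeight K α β lam C 1 u := by
        unfold errorWeight
        ring

end Partition

namespace IsStrongHolderBiWith

variable {T α β lam d C CK : ℝ} {K K' : ℝ → ℝ → ℝ} {ψ : ℝ → ℝ → E}

theorem norm_KstarT_step2_sub_le_singularMass (hψ : IsStrongHolderBiWith T lam C ψ)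
    (hA : CondA T α CK K K') {P Q : Partition T} (hβ : 0 ≤ β) (hαβ : α < β) (hβlam : β < lam)
    (hlam : lam ≤ 1) (hP : P.mesh ≤ d) (hQ : Q.mesh ≤ d) (hd1 : d ≤ 1) {u v : ℝ}
    (hu : u ∈ Ioo 0 T) (hv : v ∈ Ioo 0 T) :
    ‖KstarT T K K' (fun x y => step2 P Q ψ x y - ψ x y) u v‖ ≤
      C * ((d ^ (lam - β) * |K T u| +
            singularMass T α β CK u * (d ^ (lam - β) + P.cellWeight lam β u)) *
          (|K T v| + singularMass T α β CK v * (T ^ (lam - β) + Q.cellWeight lam β v)) +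
        (|K T u| + singularMass T α β CK u * T ^ (lam - β)) *
          (d ^ (lam - β) * |K T v| +
            singularMass T α β CK v * (d ^ (lam - β) + Q.cellWeight lam β v))) := by
  have hcorner := hψ.cornerHolder_step2_sub hβ hβlam hlam hP hQ hd1 (Ioo_subset_Ico_self hu)
    (Ioo_subset_Ico_self hv)
  exact (hcorner.norm_KstarT_le hA hαβ hu hv).trans_eq (by ring)

theorem norm_KstarT_step2_sub_le_errorWeight (hψ : IsStrongHolderBiWith T lam C ψ)
    (hA : CondA T α CK K K') {P Q : Partition T} (hβ : 0 ≤ β) (hαβ : α < β) (hβlam : β < lam)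
    (hlam : lam ≤ 1) (hP : P.mesh ≤ d) (hQ : Q.mesh ≤ d) (hd : d ∈ Ioc 0 1) {u v : ℝ}
    (hu : u ∈ Ioo 0 T) (hv : v ∈ Ioo 0 T) :
    ‖KstarT T K K' (fun x y => step2 P Q ψ x y - ψ x y) u v‖ ≤
      C * (P.errorWeight K α β lam CK (d ^ (lam - β)) u * Q.errorWeight K α β lam CK 1 v +
        P.errorWeight K α β lam CK 1 u * Q.errorWeight K α β lam CK (d ^ (lam - β)) v) := by
  have hT : 0 < T := hu.1.trans hu.2
  have hC : 0 ≤ C := (hψ.isHolderWith_left (right_mem_Icc.2 hT.le)).nonneg hT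
  have hη : 0 ≤ d ^ (lam - β) := Real.rpow_nonneg hd.1.le _
  have ha := P.cellWeight_nonneg (lam := lam) (β := β) hu.2
  have hb := Q.cellWeight_nonneg (lam := lam) (β := β) hv.2
  have hγu := singularMass_mem_Icc (hA.nonneg hT) hαβ (Ioo_subset_Icc_self hu)
  have hγv := singularMass_mem_Icc (hA.nonneg hT) hαβ (Ioo_subset_Icc_self hv)
  have hγu₀ := hγu.1
  have hγv₀ := hγv.1
  have hP_one : |K T u| + singularMass T α β CK u * T ^ (lam - β) ≤
      P.errorWeight K α β lam CK 1 u := by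
    refine le_trans ?_ (P.abs_add_le_errorWeight_one hT.le hγu hu.2)
    gcongr
    exact le_add_of_nonneg_right ha
  have hP_nonneg {m : ℝ} (hm : 0 ≤ m) : 0 ≤ P.errorWeight K α β lam CK m u :=
    P.errorWeight_nonneg hT.le hm (hγu.1.trans hγu.2) hu.2
  refine (hψ.norm_KstarT_step2_sub_le_singularMass hA hβ hαβ hβlam hlam hP hQ hd.2 hu hv).trans
    (mul_le_mul_of_nonneg_left (add_le_add (mul_le_mul ?_ ?_ (by positivity) (hP_nonneg hη))
      (mul_le_mul hP_one ?_ (by positivity) (hP_nonneg zero_le_one))) hC)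
  · exact P.level_mul_abs_add_le_errorWeight hT.le hη hγu hu.2
  · exact Q.abs_add_le_errorWeight_one hT.le hγv hv.2
  · exact Q.level_mul_abs_add_le_errorWeight hT.le hη hγv hv.2

end IsStrongHolderBiWith

namespace Partition

variable {T : ℝ} (P : Partition T) {lam β d : ℝ}

theorem cellWeight_sq_ae_eq {i : ℕ} (hi : i < P.n) :
    ∀ᵐ u, u ∈ uIoc (P.pts i) (P.pts (i + 1)) → P.cellWeight lam β u ^ 2 =
      ((P.pts (i + 1) - P.pts i) ^ lam) ^ 2 * (P.pts (i + 1) - u) ^ (-(2 * β)) := by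
  filter_upwards [Measure.ae_ne volume (P.pts (i + 1))] with u hu_ne hu
  rw [uIoc_of_le (P.lt i hi).le] at hu
  have hlt : u < P.pts (i + 1) := hu.2.lt_of_ne hu_ne
  have hcell : P.cellIndex u = i := by
    refine (P.cellIndex_eq_iff hi ⟨?_, ?_⟩).2 ⟨hu.1.le, hlt⟩
    · exact P.first.ge.trans ((P.monotoneOn_pts P.n.zero_le hi.le i.zero_le).trans hu.1.le)
    · exact hlt.trans_le ((P.monotoneOn_pts hi self_mem_Iic hi).trans_eq P.last)
  have hexp : -(2 * β) = -β * (2 : ℕ) := by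
    push_cast
    ring
  rw [cellWeight, rightPt, leftPt, hcell, mul_pow, hexp,
    Real.rpow_mul_natCast (sub_pos.2 hlt).le]

theorem intervalIntegrable_cellWeight_sq_cell (hβ : β < 1 / 2) {i : ℕ} (hi : i < P.n) :
    IntervalIntegrable (fun u => P.cellWeight lam β u ^ 2) volume (P.pts i) (P.pts (i + 1)) := by
  have hpow : IntervalIntegrable (fun r : ℝ => r ^ (-(2 * β))) volume
      (P.pts (i + 1) - P.pts i) 0 :=
    (intervalIntegral.intervalIntegrable_rpow' (by linarith)).symm
  have hcell : IntervalIntegrable (fun u => ((P.pts (i + 1) - P.pts i) ^ lam) ^ 2 *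
      (P.pts (i + 1) - u) ^ (-(2 * β))) volume (P.pts i) (P.pts (i + 1)) := by
    simpa using (hpow.comp_sub_left (P.pts (i + 1))).const_mul _
  refine hcell.congr_ae ((ae_restrict_iff' measurableSet_uIoc).2 ?_)
  filter_upwards [P.cellWeight_sq_ae_eq (lam := lam) (β := β) hi] with u hu hu_mem
  exact (hu hu_mem).symm

theorem integral_cellWeight_sq_cell_le (hβ : β < 1 / 2) (hβlam : β ≤ lam) (hd : P.mesh ≤ d)
    {i : ℕ} (hi : i < P.n) :
    ∫ u in (P.pts i)..(P.pts (i + 1)), P.cellWeight lam β u ^ 2 ≤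
      (d ^ (lam - β)) ^ 2 / (1 - 2 * β) * (P.pts (i + 1) - P.pts i) := by
  set x := P.pts (i + 1) - P.pts i
  have hx : 0 < x := sub_pos.2 (P.lt i hi)
  have hxd : x ≤ d := (P.sub_le_mesh hi).trans hd
  have hpow : (x ^ lam) ^ 2 * x ^ (1 - 2 * β) = (x ^ (lam - β)) ^ 2 * x := by
    rw [← Real.rpow_mul_natCast hx.le, ← Real.rpow_mul_natCast hx.le, ← Real.rpow_add hx,
      ← Real.rpow_add_one hx.ne']
    congr 1
    push_cast
    ring
  calc ∫ u in (P.pts i)..(P.pts (i + 1)), P.cellWeight lam β u ^ 2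
      = ∫ u in (P.pts i)..(P.pts (i + 1)), (x ^ lam) ^ 2 * (P.pts (i + 1) - u) ^ (-(2 * β)) :=
        intervalIntegral.integral_congr_ae (P.cellWeight_sq_ae_eq hi)
    _ = (x ^ lam) ^ 2 * (x ^ (1 - 2 * β) / (1 - 2 * β)) := by
        rw [intervalIntegral.integral_const_mul,
          intervalIntegral.integral_comp_sub_left (fun r => r ^ (-(2 * β))),
          integral_rpow (Or.inl (by linarith)), sub_self, Real.zero_rpow (by linarith), sub_zero,
          neg_add_eq_sub]
    _ = (x ^ (lam - β)) ^ 2 / (1 - 2 * β) * x := by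
        rw [← mul_div_assoc, hpow, div_mul_eq_mul_div]
    _ ≤ (d ^ (lam - β)) ^ 2 / (1 - 2 * β) * x := by
        have : 0 ≤ 1 - 2 * β := by linarith
        gcongr

theorem memLp_cellWeight (hT : 0 ≤ T) (hβ : β < 1 / 2) :
    MemLp (P.cellWeight lam β) 2 (volume.restrict (Ioo 0 T)) := by
  refine (memLp_two_iff_integrable_sq P.measurable_cellWeight.aestronglyMeasurable).2
    ((intervalIntegrable_iff_integrableOn_Ioo_of_le hT).1 ?_)
  have h := IntervalIntegrable.trans_iterate fun i hi =>
    P.intervalIntegrable_cellWeight_sq_cell (lam := lam) hβ (i := i) hi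
  rwa [P.first, P.last] at h

theorem integral_cellWeight_sq_le (hT : 0 ≤ T) (hβ : β < 1 / 2) (hβlam : β ≤ lam)
    (hd : P.mesh ≤ d) :
    ∫ u in Ioo 0 T, P.cellWeight lam β u ^ 2 ≤ (d ^ (lam - β)) ^ 2 / (1 - 2 * β) * T := by
  have hsum := intervalIntegral.sum_integral_adjacent_intervals fun i hi =>
    P.intervalIntegrable_cellWeight_sq_cell (lam := lam) hβ (i := i) hi
  rw [P.first, P.last] at hsum
  calc ∫ u in Ioo 0 T, P.cellWeight lam β u ^ 2
      = ∫ u in (0 : ℝ)..T, P.cellWeight lam β u ^ 2 := by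
        rw [intervalIntegral.integral_of_le hT, integral_Ioc_eq_integral_Ioo]
    _ = ∑ i ∈ Finset.range P.n, ∫ u in (P.pts i)..(P.pts (i + 1)), P.cellWeight lam β u ^ 2 :=
        hsum.symm
    _ ≤ ∑ i ∈ Finset.range P.n, (d ^ (lam - β)) ^ 2 / (1 - 2 * β) *
          (P.pts (i + 1) - P.pts i) := Finset.sum_le_sum fun i hi =>
        P.integral_cellWeight_sq_cell_le hβ hβlam hd (Finset.mem_range.1 hi)
    _ = (d ^ (lam - β)) ^ 2 / (1 - 2 * β) * T := by
        rw [← Finset.mul_sum, Finset.sum_range_sub, P.first, P.last, sub_zero]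

end Partition

theorem integral_const_mul_add_sq_le {X : Type*} [MeasurableSpace X] {μ : Measure X}
    {f g : X → ℝ} (hf : MemLp f 2 μ) (hg : MemLp g 2 μ) {m G : ℝ}
    (hG : ∫ x, g x ^ 2 ∂μ ≤ m ^ 2 * G) (c : ℝ) :
    ∫ x, (m * f x + c * g x) ^ 2 ∂μ ≤ m ^ 2 * (2 * ((∫ x, f x ^ 2 ∂μ) + c ^ 2 * G)) := by
  have hf_sq := hf.integrable_sq.const_mul (2 * m ^ 2)
  have hg_sq := hg.integrable_sq.const_mul (2 * c ^ 2)
  calc ∫ x, (m * f x + c * g x) ^ 2 ∂μ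
      ≤ ∫ x, (2 * m ^ 2 * f x ^ 2 + 2 * c ^ 2 * g x ^ 2) ∂μ :=
        integral_mono ((hf.const_mul m).add (hg.const_mul c)).integrable_sq (hf_sq.add hg_sq)
          fun x => (add_sq_le (a := m * f x) (b := c * g x)).trans_eq (by ring)
    _ = 2 * m ^ 2 * (∫ x, f x ^ 2 ∂μ) + 2 * c ^ 2 * ∫ x, g x ^ 2 ∂μ := by
        rw [integral_add hf_sq hg_sq, integral_const_mul, integral_const_mul]
    _ ≤ 2 * m ^ 2 * (∫ x, f x ^ 2 ∂μ) + 2 * c ^ 2 * (m ^ 2 * G) := by gcongr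
    _ = m ^ 2 * (2 * ((∫ x, f x ^ 2 ∂μ) + c ^ 2 * G)) := by ring

namespace CondA

variable {T α β lam C : ℝ} {K K' : ℝ → ℝ → ℝ}

theorem memLp_abs_add (hA : CondA T α C K K') (hK : Measurable (K T)) (hT : 0 < T)
    (hα : α < 1 / 2) (a : ℝ) : MemLp (fun u => |K T u| + a) 2 (volume.restrict (Ioo 0 T)) :=
  (hA.memLp_two hK hT hα).abs.add (memLp_const a)

theorem memLp_errorWeight (hA : CondA T α C K K') (hK : Measurable (K T)) (hT : 0 < T)
    (hα : α < 1 / 2) (hβ : β < 1 / 2) (P : Partition T) (m : ℝ) :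
    MemLp (P.errorWeight K α β lam C m) 2 (volume.restrict (Ioo 0 T)) :=
  ((hA.memLp_abs_add hK hT hα _).const_mul m).add ((P.memLp_cellWeight hT.le hβ).const_mul _)

theorem exists_integral_errorWeight_sq_le (hA : CondA T α C K K') (hK : Measurable (K T))
    (hT : 0 < T) (hα : α < 1 / 2) (hβ : β < 1 / 2) (hβlam : β ≤ lam) :
    ∃ B, 0 ≤ B ∧ ∀ (P : Partition T) (d m : ℝ), P.mesh ≤ d → 0 ≤ d → d ^ (lam - β) ≤ m →
      ∫ u in Ioo 0 T, P.errorWeight K α β lam C m u ^ 2 ≤ m ^ 2 * B := by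
  have hβ' : 0 < 1 - 2 * β := by linarith
  refine ⟨2 * ((∫ u in Ioo 0 T, (|K T u| + singularMass T α β C 0 * (1 + T ^ (lam - β))) ^ 2) +
    singularMass T α β C 0 ^ 2 * (T / (1 - 2 * β))), by positivity, fun P d m hP hd hm => ?_⟩
  refine integral_const_mul_add_sq_le (hA.memLp_abs_add hK hT hα _)
    (P.memLp_cellWeight hT.le hβ) ?_ _
  calc ∫ u in Ioo 0 T, P.cellWeight lam β u ^ 2
      ≤ (d ^ (lam - β)) ^ 2 / (1 - 2 * β) * T := P.integral_cellWeight_sq_le hT.le hβ hβlam hP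
    _ ≤ m ^ 2 / (1 - 2 * β) * T := by gcongr
    _ = m ^ 2 * (T / (1 - 2 * β)) := by ring

end CondA

theorem IsStrongHolderBiWith.exists_integral_norm_KstarT_step2_sub_sq_le {T α β lam C CK : ℝ}
    {K K' : ℝ → ℝ → ℝ} {ψ : ℝ → ℝ → E} (hψ : IsStrongHolderBiWith T lam C ψ)
    (hA : CondA T α CK K K') (hK : Measurable (K T)) (hT : 0 < T) (hβ : 0 ≤ β)
    (hβ_half : β < 1 / 2) (hαβ : α < β) (hβlam : β < lam) (hlam : lam ≤ 1) :
    ∃ B, ∀ d ∈ Ioc (0 : ℝ) 1, ∀ P Q : Partition T, P.mesh ≤ d → Q.mesh ≤ d →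
      ∫ u in (0 : ℝ)..T, ∫ v in (0 : ℝ)..T,
        ‖KstarT T K K' (fun x y => step2 P Q ψ x y - ψ x y) u v‖ ^ 2 ≤
          B * (d ^ (lam - β)) ^ 2 := by
  have hα : α < 1 / 2 := hαβ.trans hβ_half
  obtain ⟨B, hB, hweight⟩ := hA.exists_integral_errorWeight_sq_le hK hT hα hβ_half hβlam.le
  refine ⟨2 * C ^ 2 * (2 * B ^ 2), fun d hd P Q hP hQ => ?_⟩
  have hη : d ^ (lam - β) ≤ 1 := Real.rpow_le_one hd.1.le hd.2 (sub_pos.2 hβlam).le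
  have hint (R : Partition T) (m c : ℝ) :
      IntegrableOn (fun u => c * R.errorWeight K α β lam CK m u ^ 2) (Ioo 0 T) :=
    (hA.memLp_errorWeight hK hT hα hβ_half R m).integrable_sq.const_mul c
  have hpointwise : ∀ u ∈ Ioo 0 T, ∀ v ∈ Ioo 0 T,
      ‖KstarT T K K' (fun x y => step2 P Q ψ x y - ψ x y) u v‖ ^ 2 ≤
        2 * C ^ 2 * P.errorWeight K α β lam CK (d ^ (lam - β)) u ^ 2 *
            (1 * Q.errorWeight K α β lam CK 1 v ^ 2) +
          2 * C ^ 2 * P.errorWeight K α β lam CK 1 u ^ 2 *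
            (1 * Q.errorWeight K α β lam CK (d ^ (lam - β)) v ^ 2) := by
    intro u hu v hv
    refine (pow_le_pow_left₀ (norm_nonneg _)
      (hψ.norm_KstarT_step2_sub_le_errorWeight hA hβ hαβ hβlam hlam hP hQ hd hu hv) 2).trans ?_
    rw [mul_pow]
    exact (mul_le_mul_of_nonneg_left add_sq_le (sq_nonneg C)).trans_eq (by ring)
  simp only [intervalIntegral.integral_of_le hT.le, integral_Ioc_eq_integral_Ioo]
  refine (setIntegral_setIntegral_le_of_le_mul_add_mul measurableSet_Ioo measurableSet_Ioo
    (fun _ _ => sq_nonneg _) (hint P _ _) (hint P _ _) (hint Q _ _) (hint Q _ _)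
    hpointwise).trans ?_
  have hPη := hweight P d (d ^ (lam - β)) hP hd.1.le le_rfl
  have hQη := hweight Q d (d ^ (lam - β)) hQ hd.1.le le_rfl
  have hP_one := hweight P d 1 hP hd.1.le hη
  have hQ_one := hweight Q d 1 hQ hd.1.le hη
  simp only [integral_const_mul, one_mul]
  calc _ ≤ 2 * C ^ 2 * ((d ^ (lam - β)) ^ 2 * B) * (1 ^ 2 * B) +
        2 * C ^ 2 * (1 ^ 2 * B) * ((d ^ (lam - β)) ^ 2 * B) := by gcongr
    _ = 2 * C ^ 2 * (2 * B ^ 2) * (d ^ (lam - β)) ^ 2 := by ring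

theorem kstarT_step2_tendsto_L2_general {E : Type*} [NormedAddCommGroup E] [NormedSpace ℝ E]
    [CompleteSpace E] (T α lam : ℝ) (hT : 0 < T) (hα : α < 1 / 2)
    (K K' : ℝ → ℝ → ℝ) (hK : IsVolterraKernel K) (hA : ∃ C : ℝ, CondA T α C K K')
    (ψ : ℝ → ℝ → E) (hlam : 0 < lam) (hlam' : lam ≤ 1)
    (hψ : IsStrongHolderBi T lam ψ) (hαlam : α < lam) :
    ∀ ε > 0, ∃ δ > 0, ∀ P Q : Partition T, max P.mesh Q.mesh < δ →
      (∫ u in (0:ℝ)..T, ∫ v in (0:ℝ)..T,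
          ‖KstarT T K K' (fun x y => step2 P Q ψ x y - ψ x y) u v‖ ^ 2) < ε := by
  intro ε hε
  obtain ⟨CK, hA⟩ := hA
  obtain ⟨Cψ, hψ⟩ := hψ
  obtain ⟨β, hβ_gt, hβ_lt⟩ := exists_between
    (max_lt (lt_min hαlam hα) (lt_min hlam one_half_pos))
  obtain ⟨hαβ, hβ⟩ := max_lt_iff.1 hβ_gt
  obtain ⟨hβlam, hβ_half⟩ := lt_min_iff.1 hβ_lt
  obtain ⟨B, hB⟩ := hψ.exists_integral_norm_KstarT_step2_sub_sq_le hA hK.1.of_uncurry_left hT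
    hβ.le hβ_half hαβ hβlam hlam'
  obtain ⟨d, hd, hdε⟩ := exists_mul_rpow_sq_lt (sub_pos.2 hβlam) B hε
  refine ⟨d, hd.1, fun P Q hPQ => ?_⟩
  obtain ⟨hP, hQ⟩ := max_lt_iff.1 hPQ
  exact (hB d hd P Q hP.le hQ.le).trans_lt hdε

/-- Theorem 4.1(i): convergence of `(𝒦*⊗𝒦*)(ψ^π − ψ)` to `0` in
`L²([0,T]²; E)` as the mesh of the grid partition tends to `0`. -/
theorem kstarT_step2_tendsto_L2 {E : Type*} [NormedAddCommGroup E] [NormedSpace ℝ E]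
    [CompleteSpace E] (T α lam : ℝ) (hT : 0 < T) (hα : 0 ≤ α) (hα' : α < 1 / 4)
    (K K' : ℝ → ℝ → ℝ) (hK : IsVolterraKernel K) (hA : ∃ C : ℝ, CondA T α C K K')
    (ψ : ℝ → ℝ → E) (hlam : 0 < lam) (hlam' : lam ≤ 1)
    (hψ : IsStrongHolderBi T lam ψ) (hαlam : α < lam) :
    ∀ ε > 0, ∃ δ > 0, ∀ P Q : Partition T, max P.mesh Q.mesh < δ →
      (∫ u in (0:ℝ)..T, ∫ v in (0:ℝ)..T,
          ‖KstarT T K K' (fun x y => step2 P Q ψ x y - ψ x y) u v‖ ^ 2) < ε := by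
  exact kstarT_step2_tendsto_L2_general T α lam hT (by linarith) K K' hK hA ψ hlam hlam'
    hψ hαlam

end YS
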